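/- There is a (unique) Hopf algebra structure on the skew group algebra B = A # kG whose coproduct Δ satisfies Δ(x) = x ⊗ 1 + g_1 ⊗ x and Δ(g) = g ⊗ g for all g ∈ G, whose counit ε satisfies ε(x) = 0 and ε(g) = 1, and whose antipode S satisfies S(x) = −g_1^{-1}x and S(g) = g^{-1} for all g ∈ G. -/

import Mathlib

/- STATEMENT 3:
There is a (unique) Hopf algebra structure on the skew group algebra
`B = A # kG` whose coproduct satisfies `Δ(x) = x ⊗ 1 + g₁ ⊗ x` and
`Δ(g) = g ⊗ g`, whose counit satisfies `ε(x) = 0`, `ε(g) = 1`, and whose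
antipode satisfies `S(x) = -g₁⁻¹x` and `S(g) = g⁻¹`. -/

open TensorProduct MulOpposite Polynomial CategoryTheory

noncomputable section

variable (k : Type) [Field k]
variable (G : Type) [Group G] [Fintype G]
variable (χ : G →* kˣ)
variable (n : ℕ)

/-- `A = k[x]/(xⁿ)`. -/
abbrev AA : Type := Polynomial k ⧸ Ideal.span {(Polynomial.X : Polynomial k) ^ n}

/-- The class of `x` in `A = k[x]/(xⁿ)`. -/
def xA : AA k n := Ideal.Quotient.mk _ Polynomial.X

variable (σ : G →* (AA k n ≃ₐ[k] AA k n))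
variable (B : Type) [Ring B] [Algebra k B]
variable (ιA : AA k n →ₐ[k] B) (ιG : G →* Bˣ)

/-- The map `G →₀ A → B`, `∑ aₘ·g ↦ ∑ ιA(aₘ)·ιG(g)`; bijectivity says that
`B` is free as a left `A`-module with basis `G`, i.e. `B = A ⊗ kG` as a vector
space. -/
def skewCombine : (G →₀ AA k n) →ₗ[k] B :=
  Finsupp.lsum k fun g : G =>
    (LinearMap.mulRight k ((ιG g : Bˣ) : B)).comp ιA.toLinearMap

/-- `B` is the skew group algebra (smash product) `A # kG` for the action `σ`
of `G` on `A = k[x]/(xⁿ)` determined by `σ g x = χ(g)·x`. -/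
structure IsSkewGroupAlgebra : Prop where
  action_x : ∀ g : G, σ g (xA k n) = (χ g : k) • xA k n
  comm : ∀ (g : G) (a : AA k n), ((ιG g : Bˣ) : B) * ιA a = ιA (σ g a) * ((ιG g : Bˣ) : B)
  bijective : Function.Bijective (skewCombine k G n B ιA ιG)

section QBinomial

/-- The Gaussian binomial coefficient `[i + j, i]` at `q`, via its Pascal recursion. -/
def qBinom {R : Type*} [CommRing R] (q : R) : ℕ → ℕ → R
  | 0, _ => 1
  | _ + 1, 0 => 1
  | i + 1, j + 1 => qBinom q i (j + 1) + q ^ (i + 1) * qBinom q (i + 1) j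

theorem qBinom_zero_right {R : Type*} [CommRing R] (q : R) (i : ℕ) : qBinom q i 0 = 1 := by
  cases i <;> simp [qBinom]

theorem qBinom_mul_prod {R : Type*} [CommRing R] (q : R) (i j : ℕ) :
    qBinom q i j * (∏ l ∈ Finset.range i, (q ^ (l + 1) - 1)) *
        (∏ l ∈ Finset.range j, (q ^ (l + 1) - 1)) =
      ∏ l ∈ Finset.range (i + j), (q ^ (l + 1) - 1) := by
  induction i generalizing j with
  | zero => simp [qBinom]
  | succ i ihi =>
    induction j with
    | zero => simp [qBinom]
    | succ j ihj =>
      have h := ihi (j + 1)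
      rw [show i + 1 + (j + 1) = i + 1 + j + 1 by ring, Finset.prod_range_succ _ (i + 1 + j),
        qBinom, Finset.prod_range_succ _ i, Finset.prod_range_succ _ j]
      rw [show i + (j + 1) = i + 1 + j by ring, Finset.prod_range_succ _ j] at h
      rw [Finset.prod_range_succ _ i] at ihj
      linear_combination (q ^ (i + 1) - 1) * h + q ^ (i + 1) * (q ^ (j + 1) - 1) * ihj

theorem qBinom_eq_zero {F : Type*} [Field F] {q : F} {m i j : ℕ} (hq : IsPrimitiveRoot q m)
    (hi : i ≠ 0) (hj : j ≠ 0) (hij : i + j = m) : qBinom q i j = 0 := by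
  have hne : ∀ a < m, ∏ l ∈ Finset.range a, (q ^ (l + 1) - 1) ≠ 0 := fun a ha =>
    Finset.prod_ne_zero_iff.2 fun l hl => sub_ne_zero.2 <|
      hq.pow_ne_one_of_pos_of_lt l.succ_ne_zero (by have := Finset.mem_range.1 hl; omega)
  have hzero : ∏ l ∈ Finset.range (i + j), (q ^ (l + 1) - 1) = 0 :=
    Finset.prod_eq_zero (i := m - 1) (Finset.mem_range.2 (by omega)) <| by
      rw [show m - 1 + 1 = m by omega, hq.pow_eq_one, sub_self]
  have h := qBinom_mul_prod q i j
  rw [hzero, mul_eq_zero, mul_eq_zero] at h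
  rcases h with (h | h) | h
  · exact h
  · exact absurd h (hne i (by omega))
  · exact absurd h (hne j (by omega))

theorem mul_pow_of_qComm {F R : Type*} [CommRing F] [Ring R] [Algebra F R] {q : F} {u v : R}
    (h : v * u = q • (u * v)) (i : ℕ) : v * u ^ i = q ^ i • (u ^ i * v) := by
  induction i with
  | zero => simp
  | succ i ih =>
    rw [pow_succ u, ← mul_assoc, ih, smul_mul_assoc, mul_assoc, h, mul_smul_comm, smul_smul,
      ← pow_succ, mul_assoc]

/-- The `q`-binomial theorem. -/
theorem add_pow_of_qComm {F R : Type*} [CommRing F] [Ring R] [Algebra F R] {q : F} {u v : R}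
    (h : v * u = q • (u * v)) (m : ℕ) :
    (u + v) ^ m =
      ∑ p ∈ Finset.HasAntidiagonal.antidiagonal m, qBinom q p.1 p.2 • (u ^ p.1 * v ^ p.2) := by
  induction m with
  | zero => simp [qBinom]
  | succ m ih =>
    let f₁ : ℕ × ℕ → F := fun p => match p with
      | (0, _) => 0
      | (i + 1, j) => qBinom q i j
    let f₂ : ℕ × ℕ → F := fun p => match p with
      | (_, 0) => 0
      | (i, j + 1) => q ^ i * qBinom q i j
    have hf : ∀ p ∈ Finset.HasAntidiagonal.antidiagonal (m + 1), qBinom q p.1 p.2 • (u ^ p.1 * v ^ p.2) =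
        f₁ p • (u ^ p.1 * v ^ p.2) + f₂ p • (u ^ p.1 * v ^ p.2) := by
      rintro ⟨i, j⟩ hp
      rw [← add_smul]
      congr 1
      rcases i with _ | i <;> rcases j with _ | j
      · simp at hp
      · simp [f₁, f₂, qBinom]
      · simp [f₁, f₂, qBinom_zero_right]
      · simp [f₁, f₂, qBinom]
    rw [Finset.sum_congr rfl hf, Finset.sum_add_distrib, Finset.Nat.sum_antidiagonal_succ,
      Finset.Nat.sum_antidiagonal_succ', pow_succ', ih, add_mul, Finset.mul_sum, Finset.mul_sum]
    simp only [f₁, f₂, zero_smul, zero_add]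
    congr 1
    · refine Finset.sum_congr rfl fun p _ => ?_
      rw [mul_smul_comm, ← mul_assoc, ← pow_succ']
    · refine Finset.sum_congr rfl fun p _ => ?_
      rw [mul_smul_comm, ← mul_assoc, mul_pow_of_qComm h, smul_mul_assoc, mul_assoc, ← pow_succ',
        smul_smul, mul_comm]

theorem add_pow_eq_zero_of_qComm {F R : Type*} [Field F] [Ring R] [Algebra F R] {q : F} {u v : R}
    {m : ℕ} (hq : IsPrimitiveRoot q m) (h : v * u = q • (u * v)) (hu : u ^ m = 0)
    (hv : v ^ m = 0) : (u + v) ^ m = 0 := by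
  rw [add_pow_of_qComm h]
  refine Finset.sum_eq_zero ?_
  rintro ⟨i, j⟩ hp
  rw [Finset.HasAntidiagonal.mem_antidiagonal] at hp
  dsimp only at hp ⊢
  by_cases hi : i = 0
  · rw [show j = m by omega, hv, mul_zero, smul_zero]
  by_cases hj : j = 0
  · rw [show i = m by omega, hu, zero_mul, smul_zero]
  rw [qBinom_eq_zero hq hi hj hp, zero_smul]

end QBinomial

section Antipode

variable {F H : Type*} [Field F] [Ring H] [Algebra F H]

theorem mul'_map_left_mul (S : H →ₗ[F] H) (hS : ∀ a b, S (a * b) = S b * S a)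
    {s : H ⊗[F] H} {r : F}
    (hs : LinearMap.mul' F H (TensorProduct.map S LinearMap.id s) = algebraMap F H r)
    (t : H ⊗[F] H) :
    LinearMap.mul' F H (TensorProduct.map S LinearMap.id (s * t)) =
      r • LinearMap.mul' F H (TensorProduct.map S LinearMap.id t) := by
  induction t with
  | zero => simp
  | add t₁ t₂ h₁ h₂ => rw [mul_add, map_add, map_add, h₁, h₂, map_add, map_add, smul_add]
  | tmul a b =>
    have key : LinearMap.mul' F H (TensorProduct.map S LinearMap.id (s * a ⊗ₜ[F] b)) =
        S a * LinearMap.mul' F H (TensorProduct.map S LinearMap.id s) * b := by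
      clear hs
      induction s with
      | zero => simp
      | add s₁ s₂ h₁ h₂ =>
        rw [add_mul, map_add, map_add, h₁, h₂, map_add, map_add, mul_add, add_mul]
      | tmul c d => simp [hS, mul_assoc]
    rw [key, hs, ← Algebra.commutes, mul_assoc, ← Algebra.smul_def]
    simp

theorem mul'_map_right_mul (S : H →ₗ[F] H) (hS : ∀ a b, S (a * b) = S b * S a)
    {t : H ⊗[F] H} {r : F}
    (ht : LinearMap.mul' F H (TensorProduct.map LinearMap.id S t) = algebraMap F H r)
    (s : H ⊗[F] H) :
    LinearMap.mul' F H (TensorProduct.map LinearMap.id S (s * t)) =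
      r • LinearMap.mul' F H (TensorProduct.map LinearMap.id S s) := by
  induction s with
  | zero => simp
  | add s₁ s₂ h₁ h₂ => rw [add_mul, map_add, map_add, h₁, h₂, map_add, map_add, smul_add]
  | tmul a b =>
    have key : LinearMap.mul' F H (TensorProduct.map LinearMap.id S (a ⊗ₜ[F] b * t)) =
        a * LinearMap.mul' F H (TensorProduct.map LinearMap.id S t) * S b := by
      clear ht
      induction t with
      | zero => simp
      | add s₁ s₂ h₁ h₂ =>
        rw [mul_add, map_add, map_add, h₁, h₂, map_add, map_add, mul_add, add_mul]
      | tmul c d => simp [hS, mul_assoc]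
    rw [key, ht, ← Algebra.commutes, mul_assoc, ← Algebra.smul_def]
    simp

/-- The left antipode law for an anti-multiplicative map may be checked on algebra generators. -/
theorem left_antipode_of_adjoin (Δ : H →ₐ[F] H ⊗[F] H) (ε : H →ₐ[F] F) (S : H →ₗ[F] H)
    (hS : ∀ a b, S (a * b) = S b * S a) (hS1 : S 1 = 1) {X : Set H}
    (hX : Algebra.adjoin F X = ⊤)
    (h : ∀ x ∈ X, LinearMap.mul' F H (TensorProduct.map S LinearMap.id (Δ x)) =
      algebraMap F H (ε x)) :
    LinearMap.mul' F H ∘ₗ TensorProduct.map S LinearMap.id ∘ₗ Δ.toLinearMap =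
      Algebra.linearMap F H ∘ₗ ε.toLinearMap := by
  ext b
  have hb : b ∈ Algebra.adjoin F X := hX ▸ Algebra.mem_top
  simp only [LinearMap.comp_apply, AlgHom.toLinearMap_apply, Algebra.linearMap_apply]
  induction hb using Algebra.adjoin_induction with
  | mem x hx => exact h x hx
  | algebraMap r =>
    simp [Algebra.algebraMap_eq_smul_one, Algebra.TensorProduct.one_def, hS1]
  | add x y _ _ hx hy => simp only [map_add, hx, hy]
  | mul x y _ _ hx hy =>
    rw [map_mul, mul'_map_left_mul S hS hx, hy, map_mul, map_mul, Algebra.smul_def]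

/-- The right antipode law for an anti-multiplicative map may be checked on algebra generators. -/
theorem right_antipode_of_adjoin (Δ : H →ₐ[F] H ⊗[F] H) (ε : H →ₐ[F] F) (S : H →ₗ[F] H)
    (hS : ∀ a b, S (a * b) = S b * S a) (hS1 : S 1 = 1) {X : Set H}
    (hX : Algebra.adjoin F X = ⊤)
    (h : ∀ x ∈ X, LinearMap.mul' F H (TensorProduct.map LinearMap.id S (Δ x)) =
      algebraMap F H (ε x)) :
    LinearMap.mul' F H ∘ₗ TensorProduct.map LinearMap.id S ∘ₗ Δ.toLinearMap =
      Algebra.linearMap F H ∘ₗ ε.toLinearMap := by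
  ext b
  have hb : b ∈ Algebra.adjoin F X := hX ▸ Algebra.mem_top
  simp only [LinearMap.comp_apply, AlgHom.toLinearMap_apply, Algebra.linearMap_apply]
  induction hb using Algebra.adjoin_induction with
  | mem x hx => exact h x hx
  | algebraMap r =>
    simp [Algebra.algebraMap_eq_smul_one, Algebra.TensorProduct.one_def, hS1]
  | add x y _ _ hx hy => simp only [map_add, hx, hy]
  | mul x y _ _ hx hy =>
    rw [map_mul, mul'_map_right_mul S hS hy, hx, map_mul, map_mul, Algebra.smul_def,
      Algebra.commutes]

/-- A left and a right convolution inverse of the identity of a coalgebra agree. -/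
theorem antipode_unique [Coalgebra F H] {S T : H →ₗ[F] H}
    (hS : LinearMap.mul' F H ∘ₗ TensorProduct.map S LinearMap.id ∘ₗ Coalgebra.comul =
      Algebra.linearMap F H ∘ₗ Coalgebra.counit)
    (hT : LinearMap.mul' F H ∘ₗ TensorProduct.map LinearMap.id T ∘ₗ Coalgebra.comul =
      Algebra.linearMap F H ∘ₗ Coalgebra.counit) : S = T :=
  WithConv.toConv_injective <|
    left_inv_eq_right_inv (a := WithConv.toConv (LinearMap.id : H →ₗ[F] H))
      (congrArg WithConv.toConv hS) (congrArg WithConv.toConv hT)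

end Antipode

section SkewGroupAlgebra

set_option linter.unusedSectionVars false

theorem xA_pow : xA k n ^ n = 0 := by
  rw [xA, ← map_pow]
  exact Ideal.Quotient.eq_zero_iff_mem.2 (Ideal.mem_span_singleton_self _)

theorem exists_algHom_of_pow_eq_zero {R : Type*} [Ring R] [Algebra k R] {r : R} (hr : r ^ n = 0) :
    ∃ f : AA k n →ₐ[k] R, f (xA k n) = r := by
  have h : ∀ p ∈ Ideal.span {(X : k[X]) ^ n}, aeval r p = 0 := by
    intro p hp
    obtain ⟨s, rfl⟩ := Ideal.mem_span_singleton.1 hp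
    simp [hr]
  exact ⟨Ideal.Quotient.liftₐ _ (aeval r) h, aeval_X r⟩

variable {k G χ n σ B ιA ιG}

theorem AA.induction_on {P : AA k n → Prop} (a : AA k n)
    (algebraMap : ∀ c : k, P (algebraMap k (AA k n) c))
    (add : ∀ a b, P a → P b → P (a + b)) (mul_x : ∀ a, P a → P (a * xA k n)) : P a := by
  obtain ⟨p, rfl⟩ := Ideal.Quotient.mk_surjective a
  induction p using Polynomial.induction_on with
  | C c => exact algebraMap c
  | add p q hp hq => rw [map_add]; exact add _ _ hp hq
  | monomial m c h => rw [pow_succ, ← mul_assoc, map_mul]; exact mul_x _ h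

theorem skewCombine_single (g : G) (a : AA k n) :
    skewCombine k G n B ιA ιG (Finsupp.single g a) = ιA a * (ιG g : B) := by
  simp [skewCombine]

theorem ne_zero_of_isPrimitiveRoot_character (g₁ : G) (hprim : IsPrimitiveRoot ((χ g₁ : kˣ) : k) n) : n ≠ 0 := by
  rintro rfl
  have h : ((χ g₁ : kˣ) : k) ^ Fintype.card G = 1 := by
    rw [← Units.val_pow_eq_pow_val, ← map_pow, pow_card_eq_one, map_one, Units.val_one]
  exact Fintype.card_ne_zero (Nat.eq_zero_of_zero_dvd (hprim.dvd_of_pow_eq_one _ h))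

namespace IsSkewGroupAlgebra

theorem mul_x (hskew : IsSkewGroupAlgebra k G χ n σ B ιA ιG) (g : G) :
    (ιG g : B) * ιA (xA k n) = (χ g : k) • (ιA (xA k n) * (ιG g : B)) := by
  rw [hskew.comm, hskew.action_x, map_smul, smul_mul_assoc]

theorem induction_on (hskew : IsSkewGroupAlgebra k G χ n σ B ιA ιG) {P : B → Prop} (b : B)
    (zero : P 0) (add : ∀ b c, P b → P c → P (b + c))
    (mul : ∀ (a : AA k n) (g : G), P (ιA a * (ιG g : B))) : P b := by
  obtain ⟨v, rfl⟩ := hskew.bijective.2 b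
  induction v using Finsupp.induction_linear with
  | zero => rwa [map_zero]
  | add v w hv hw => rw [map_add]; exact add _ _ hv hw
  | single g a => rw [skewCombine_single]; exact mul a g

theorem adjoin_eq_top (hskew : IsSkewGroupAlgebra k G χ n σ B ιA ιG) :
    Algebra.adjoin k (insert (ιA (xA k n)) (Set.range fun g => (ιG g : B))) = ⊤ := by
  refine eq_top_iff.2 fun b _ => hskew.induction_on b (zero_mem _) (fun _ _ => add_mem)
    fun a g => mul_mem ?_ (Algebra.subset_adjoin (Or.inr ⟨g, rfl⟩))
  induction a using AA.induction_on with
  | algebraMap c => rw [AlgHom.commutes]; exact Subalgebra.algebraMap_mem _ c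
  | add a b ha hb => rw [map_add]; exact add_mem ha hb
  | mul_x a ha => rw [map_mul]; exact mul_mem ha (Algebra.subset_adjoin (Or.inl rfl))

theorem algHom_ext (hskew : IsSkewGroupAlgebra k G χ n σ B ιA ιG) {R : Type*} [Ring R]
    [Algebra k R] {φ ψ : B →ₐ[k] R} (hx : φ (ιA (xA k n)) = ψ (ιA (xA k n)))
    (hg : ∀ g, φ (ιG g : B) = ψ (ιG g : B)) : φ = ψ :=
  AlgHom.ext_of_adjoin_eq_top hskew.adjoin_eq_top <| by
    rintro _ (rfl | ⟨g, rfl⟩)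
    exacts [hx, hg g]

/-- The universal property of the skew group algebra. -/
theorem exists_algHom (hskew : IsSkewGroupAlgebra k G χ n σ B ιA ιG) {R : Type*} [Ring R]
    [Algebra k R] (r : R) (φ : G →* R) (hr : r ^ n = 0)
    (hφ : ∀ g, φ g * r = (χ g : k) • (r * φ g)) :
    ∃ ψ : B →ₐ[k] R, ψ (ιA (xA k n)) = r ∧ ∀ g, ψ (ιG g : B) = φ g := by
  obtain ⟨f, hf⟩ := exists_algHom_of_pow_eq_zero k n hr
  have hcomm : ∀ g a, φ g * f a = f (σ g a) * φ g := by
    intro g a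
    induction a using AA.induction_on with
    | algebraMap c => simp only [AlgEquiv.commutes, AlgHom.commutes, Algebra.commutes]
    | add a b ha hb => simp only [map_add, mul_add, add_mul, ha, hb]
    | mul_x a ha =>
      rw [map_mul, ← mul_assoc, ha, mul_assoc, hf, hφ, map_mul, hskew.action_x, map_mul, map_smul,
        hf, mul_assoc, smul_mul_assoc]
  let E := LinearEquiv.ofBijective (skewCombine k G n B ιA ιG) hskew.bijective
  let L : B →ₗ[k] R := (Finsupp.lsum k fun g : G =>
    (LinearMap.mulRight k (φ g)).comp f.toLinearMap).comp E.symm.toLinearMap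
  have hL : ∀ a g, L (ιA a * (ιG g : B)) = f a * φ g := by
    intro a g
    have : E.symm (ιA a * (ιG g : B)) = Finsupp.single g a :=
      E.symm_apply_eq.2 (skewCombine_single g a).symm
    simp [L, this]
  have hL1 : L 1 = 1 := by simpa using hL 1 1
  have hLmul : ∀ b c, L (b * c) = L b * L c := by
    intro b c
    induction b using hskew.induction_on with
    | zero => simp
    | add b b' hb hb' => rw [add_mul, map_add, hb, hb', map_add, add_mul]
    | mul a g =>
      induction c using hskew.induction_on with
      | zero => simp
      | add c c' hc hc' => rw [mul_add, map_add, hc, hc', map_add, mul_add]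
      | mul a' g' =>
        have : ιA a * (ιG g : B) * (ιA a' * (ιG g' : B)) =
            ιA (a * σ g a') * (ιG (g * g') : B) := by
          rw [mul_assoc, ← mul_assoc (ιG g : B), hskew.comm, map_mul, map_mul, Units.val_mul]
          simp only [mul_assoc]
        rw [this, hL, hL, hL, map_mul, map_mul, mul_assoc, mul_assoc (f a), ← mul_assoc (φ g),
          hcomm, mul_assoc]
  refine ⟨AlgHom.ofLinearMap L hL1 hLmul, ?_, fun g => ?_⟩
  · simpa [hf] using hL (xA k n) 1
  · simpa using hL 1 g

theorem exists_comul (hskew : IsSkewGroupAlgebra k G χ n σ B ιA ιG) {g₁ : G}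
    (hg₁ : g₁ ∈ Subgroup.center G) (hprim : IsPrimitiveRoot ((χ g₁ : kˣ) : k) n) :
    ∃ Δ : B →ₐ[k] B ⊗[k] B,
      Δ (ιA (xA k n)) = ιA (xA k n) ⊗ₜ[k] 1 + (ιG g₁ : B) ⊗ₜ[k] ιA (xA k n) ∧
      ∀ g, Δ (ιG g : B) = (ιG g : B) ⊗ₜ[k] (ιG g : B) := by
  let φ : G →* B ⊗[k] B :=
    { toFun := fun g => (ιG g : B) ⊗ₜ[k] (ιG g : B)
      map_one' := by simp [Algebra.TensorProduct.one_def]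
      map_mul' := fun g h => by simp }
  have hx : ιA (xA k n) ^ n = 0 := by rw [← map_pow, xA_pow, map_zero]
  refine hskew.exists_algHom _ φ (add_pow_eq_zero_of_qComm hprim ?_ ?_ ?_) fun g => ?_
  · rw [Algebra.TensorProduct.tmul_mul_tmul, Algebra.TensorProduct.tmul_mul_tmul, hskew.mul_x,
      mul_one, one_mul, TensorProduct.smul_tmul']
  · rw [Algebra.TensorProduct.tmul_pow, hx, zero_tmul]
  · rw [Algebra.TensorProduct.tmul_pow, hx, tmul_zero]
  · have hc : (ιG g : B) * (ιG g₁ : B) = (ιG g₁ : B) * (ιG g : B) := by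
      rw [← Units.val_mul, ← map_mul, Subgroup.mem_center_iff.1 hg₁ g, map_mul, Units.val_mul]
    have hφ : φ g = (ιG g : B) ⊗ₜ[k] (ιG g : B) := rfl
    simp only [hφ, mul_add, add_mul,
      Algebra.TensorProduct.tmul_mul_tmul, hskew.mul_x, mul_one, one_mul, smul_add, hc,
      TensorProduct.smul_tmul', TensorProduct.tmul_smul]

theorem exists_counit (hskew : IsSkewGroupAlgebra k G χ n σ B ιA ιG) (hn : n ≠ 0) :
    ∃ ε : B →ₐ[k] k, ε (ιA (xA k n)) = 0 ∧ ∀ g, ε (ιG g : B) = 1 :=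
  hskew.exists_algHom (0 : k) 1 (zero_pow hn) (by simp)

theorem exists_antipode (hskew : IsSkewGroupAlgebra k G χ n σ B ιA ιG) {g₁ : G}
    (hg₁ : g₁ ∈ Subgroup.center G) :
    ∃ S : B →ₗ[k] B, (∀ a b, S (a * b) = S b * S a) ∧ S 1 = 1 ∧
      S (ιA (xA k n)) = -((ιG g₁⁻¹ : B) * ιA (xA k n)) ∧
      ∀ g, S (ιG g : B) = (ιG g⁻¹ : B) := by
  let φ : G →* Bᵐᵒᵖ :=
    { toFun := fun g => op (ιG g⁻¹ : B)
      map_one' := by simp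
      map_mul' := fun g h => by simp [← op_mul] }
  have hx : ιA (xA k n) ^ n = 0 := by rw [← map_pow, xA_pow, map_zero]
  have hpow : (-((ιG g₁⁻¹ : B) * ιA (xA k n))) ^ n = 0 := by
    have : ∀ m, ∃ c : B, (-((ιG g₁⁻¹ : B) * ιA (xA k n))) ^ m = ιA (xA k n) ^ m * c := by
      intro m
      induction m with
      | zero => exact ⟨1, by simp⟩
      | succ m ih =>
        obtain ⟨c, hc⟩ := ih
        refine ⟨-((χ g₁⁻¹ : k) ^ (m + 1) • ((ιG g₁⁻¹ : B) * c)), ?_⟩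
        rw [pow_succ', hc, neg_mul, mul_assoc, ← mul_assoc (ιA (xA k n)), ← pow_succ',
          ← mul_assoc, mul_pow_of_qComm (hskew.mul_x g₁⁻¹), smul_mul_assoc, mul_assoc, mul_neg,
          mul_smul_comm]
    obtain ⟨c, hc⟩ := this n
    rw [hc, hx, zero_mul]
  obtain ⟨ψ, hψx, hψg⟩ := hskew.exists_algHom (op (-((ιG g₁⁻¹ : B) * ιA (xA k n)))) φ
    (by rw [← op_pow, hpow, op_zero]) fun g => by
      have hc : (ιG g⁻¹ : B) * (ιG g₁⁻¹ : B) = (ιG g₁⁻¹ : B) * (ιG g⁻¹ : B) := by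
        rw [← Units.val_mul, ← map_mul, Subgroup.mem_center_iff.1 (inv_mem hg₁) g⁻¹, map_mul,
          Units.val_mul]
      simp only [φ, MonoidHom.coe_mk, OneHom.coe_mk, ← op_mul, ← op_smul]
      rw [mul_neg, neg_mul, ← mul_assoc, hc, mul_assoc, mul_assoc, hskew.mul_x, smul_neg,
        mul_smul_comm, smul_smul, ← Units.val_mul, ← map_mul, mul_inv_cancel, map_one,
        Units.val_one, one_smul]
  refine ⟨(opLinearEquiv k).symm.toLinearMap ∘ₗ ψ.toLinearMap, ?_, ?_, ?_, ?_⟩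
  · simp
  · simp
  · simp [hψx]
  · simp [hψg, φ]

end IsSkewGroupAlgebra

end SkewGroupAlgebra

/-- **Statement 3.**  There is a unique triple `(Δ, ε, S)` making the
`k`-algebra `B = A # kG` a Hopf algebra with the prescribed values of the
coproduct, counit and antipode on the generators `x` and `g ∈ G`. -/
theorem statement3
    (g₁ : G) (hg₁ : g₁ ∈ Subgroup.center G)
    (hprim : IsPrimitiveRoot ((χ g₁ : kˣ) : k) n)
    (hskew : IsSkewGroupAlgebra k G χ n σ B ιA ιG) :
    ∃! DES : (B →ₗ[k] B ⊗[k] B) × (B →ₗ[k] k) × (B →ₗ[k] B),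
      -- `Δ` is an algebra homomorphism
      (∀ a b : B, DES.1 (a * b) = DES.1 a * DES.1 b) ∧
      DES.1 1 = 1 ∧
      -- `ε` is an algebra homomorphism
      (∀ a b : B, DES.2.1 (a * b) = DES.2.1 a * DES.2.1 b) ∧
      DES.2.1 1 = 1 ∧
      -- coassociativity
      (TensorProduct.assoc k B B B).toLinearMap ∘ₗ
          LinearMap.rTensor B DES.1 ∘ₗ DES.1 =
        LinearMap.lTensor B DES.1 ∘ₗ DES.1 ∧
      -- counit laws
      LinearMap.rTensor B DES.2.1 ∘ₗ DES.1 = TensorProduct.mk k k B 1 ∧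
      LinearMap.lTensor B DES.2.1 ∘ₗ DES.1 = (TensorProduct.mk k B k).flip 1 ∧
      -- antipode laws
      LinearMap.mul' k B ∘ₗ TensorProduct.map DES.2.2 LinearMap.id ∘ₗ DES.1 =
        Algebra.linearMap k B ∘ₗ DES.2.1 ∧
      LinearMap.mul' k B ∘ₗ TensorProduct.map LinearMap.id DES.2.2 ∘ₗ DES.1 =
        Algebra.linearMap k B ∘ₗ DES.2.1 ∧
      -- prescribed values on the generators
      DES.1 (ιA (xA k n)) =
        ιA (xA k n) ⊗ₜ[k] 1 + ((ιG g₁ : Bˣ) : B) ⊗ₜ[k] ιA (xA k n) ∧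
      (∀ g : G, DES.1 ((ιG g : Bˣ) : B) =
        ((ιG g : Bˣ) : B) ⊗ₜ[k] ((ιG g : Bˣ) : B)) ∧
      DES.2.1 (ιA (xA k n)) = 0 ∧
      (∀ g : G, DES.2.1 ((ιG g : Bˣ) : B) = 1) ∧
      DES.2.2 (ιA (xA k n)) = -(((ιG g₁⁻¹ : Bˣ) : B) * ιA (xA k n)) ∧
      (∀ g : G, DES.2.2 ((ιG g : Bˣ) : B) = ((ιG g⁻¹ : Bˣ) : B)) := by
  obtain ⟨Δ, hΔx, hΔg⟩ := hskew.exists_comul hg₁ hprim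
  obtain ⟨ε, hεx, hεg⟩ := hskew.exists_counit (ne_zero_of_isPrimitiveRoot_character g₁ hprim)
  obtain ⟨S, hSmul, hS1, hSx, hSg⟩ := hskew.exists_antipode hg₁
  have hcoassoc : (Algebra.TensorProduct.assoc k k k B B B).toAlgHom.comp
      ((Algebra.TensorProduct.map Δ (.id k B)).comp Δ) =
        (Algebra.TensorProduct.map (.id k B) Δ).comp Δ := by
    apply hskew.algHom_ext
    · simp [hΔx, hΔg, tmul_add, add_tmul, Algebra.TensorProduct.one_def, add_assoc]
    · simp [hΔg]
  have hcounit_left : (Algebra.TensorProduct.map ε (.id k B)).comp Δ =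
      (Algebra.TensorProduct.lid k B).symm := by
    apply hskew.algHom_ext
    · simp [hΔx, hεx, hεg]
    · simp [hΔg, hεg]
  have hcounit_right : (Algebra.TensorProduct.map (.id k B) ε).comp Δ =
      (Algebra.TensorProduct.rid k k B).symm := by
    apply hskew.algHom_ext
    · simp [hΔx, hεx]
    · simp [hΔg, hεg]
  have hleft := left_antipode_of_adjoin Δ ε S hSmul hS1 hskew.adjoin_eq_top <| by
    rintro _ (rfl | ⟨g, rfl⟩)
    · simp [hΔx, hεx, hSx, hSg]
    · simp [hΔg, hεg, hSg]
  have hright := right_antipode_of_adjoin Δ ε S hSmul hS1 hskew.adjoin_eq_top <| by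
    rintro _ (rfl | ⟨g, rfl⟩)
    · simp [hΔx, hεx, hSx, hS1]
    · simp [hΔg, hεg, hSg]
  refine ⟨(Δ.toLinearMap, ε.toLinearMap, S), ⟨map_mul Δ, map_one Δ, map_mul ε, map_one ε,
    congrArg AlgHom.toLinearMap hcoassoc, congrArg AlgHom.toLinearMap hcounit_left,
    congrArg AlgHom.toLinearMap hcounit_right, hleft, hright, hΔx, hΔg, hεx, hεg, hSx, hSg⟩, ?_⟩
  rintro ⟨Δ', ε', S'⟩ ⟨hΔmul, hΔ1, hεmul, hε1, -, -, -, hleft', -, hΔx', hΔg', hεx', hεg', -, -⟩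
  dsimp only at *
  have hΔ : Δ' = Δ.toLinearMap := congrArg AlgHom.toLinearMap <|
    hskew.algHom_ext (φ := AlgHom.ofLinearMap Δ' hΔ1 hΔmul) (hΔx'.trans hΔx.symm)
      fun g => (hΔg' g).trans (hΔg g).symm
  have hε : ε' = ε.toLinearMap := congrArg AlgHom.toLinearMap <|
    hskew.algHom_ext (φ := AlgHom.ofLinearMap ε' hε1 hεmul) (hεx'.trans hεx.symm)
      fun g => (hεg' g).trans (hεg g).symm
  subst hΔ hε
  let _ : Bialgebra k B := Bialgebra.ofAlgHom Δ ε hcoassoc hcounit_left hcounit_right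
  rw [antipode_unique hleft' hright]

end
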